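/- Let J be a finite index set and for each j ∈ J let A_j = A_j⁺ + A_j⁻ be complex n×n matrices with A_j⁺ Hermitian positive semidefinite and A_j⁻ Hermitian negative semidefinite, and let c_j ∈ ℝ. Fix s ≥ 0. If v, z ∈ ℂⁿ satisfy the slack-relaxed surrogate constraints g_j(v; z) ≤ c_j + s for all j ∈ J, then v also satisfies the re-linearized constraints around itself with the same slack: g_j(v; v) ≤ c_j + s for all j ∈ J. Consequently, the previous FPP iterate together with its slack is feasible for the next FPP subproblem, so the optimal slack value is nonincreasing along the FPP iterations. -/

import Mathlib

open Matrix
open scoped ComplexOrder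

/-- A complex matrix is negative semidefinite if its negation is positive
semidefinite. -/
def Matrix.NegSemidef' {n : ℕ} (A : Matrix (Fin n) (Fin n) ℂ) : Prop :=
  (-A).PosSemidef

/-- The FPP-SCA surrogate `g(v; z)` of the quadratic `Re(vᴴ A v)` for the
decomposition `A = A⁺ + A⁻`. -/
noncomputable def surrogate {n : ℕ} (Ap An : Matrix (Fin n) (Fin n) ℂ)
    (z v : Fin n → ℂ) : ℝ :=
  (star v ⬝ᵥ (Ap *ᵥ v)).re + 2 * (star z ⬝ᵥ (An *ᵥ v)).re - (star z ⬝ᵥ (An *ᵥ z)).re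

/-!
Completing the square gives `g(v; z) = q(v) - Re((v - z)ᴴ A⁻ (v - z))`. Since `A⁻` is negative
semidefinite, `g(·; z)` majorizes the true quadratic `q`, and it touches `q` at `z`. Hence
`g(v; v) = q(v) ≤ g(v; z)`: linearizing again at `v` only relaxes the constraints at `v`.
-/

section HermitianForm

variable {ι 𝕜 : Type*} [Fintype ι] [RCLike 𝕜] {B : Matrix ι ι 𝕜}

theorem re_star_dotProduct_mulVec_comm (hB : B.IsHermitian) (x y : ι → 𝕜) :
    RCLike.re (star x ⬝ᵥ (B *ᵥ y)) = RCLike.re (star y ⬝ᵥ (B *ᵥ x)) := by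
  have h_conj : star x ⬝ᵥ (B *ᵥ y) = star (star y ⬝ᵥ (B *ᵥ x)) := by
    rw [← star_dotProduct, star_mulVec, hB.eq, ← dotProduct_mulVec]
  rw [h_conj, RCLike.star_def, RCLike.conj_re]

theorem re_star_sub_dotProduct_mulVec_sub (hB : B.IsHermitian) (x y : ι → 𝕜) :
    RCLike.re (star (x - y) ⬝ᵥ (B *ᵥ (x - y))) =
      RCLike.re (star x ⬝ᵥ (B *ᵥ x)) - 2 * RCLike.re (star y ⬝ᵥ (B *ᵥ x)) +
        RCLike.re (star y ⬝ᵥ (B *ᵥ y)) := by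
  simp only [star_sub, mulVec_sub, sub_dotProduct, dotProduct_sub, map_sub]
  rw [re_star_dotProduct_mulVec_comm hB x y]
  ring

theorem re_star_dotProduct_mulVec_nonpos (hB : (-B).PosSemidef) (x : ι → 𝕜) :
    RCLike.re (star x ⬝ᵥ (B *ᵥ x)) ≤ 0 := by
  simpa only [neg_mulVec, dotProduct_neg, map_neg, neg_nonneg] using hB.re_dotProduct_nonneg x

end HermitianForm

section Surrogate

variable {n : ℕ} {Ap An : Matrix (Fin n) (Fin n) ℂ}

theorem surrogate_self (v : Fin n → ℂ) :
    surrogate Ap An v v = (star v ⬝ᵥ ((Ap + An) *ᵥ v)).re := by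
  rw [surrogate, add_mulVec, dotProduct_add, Complex.add_re]
  ring

theorem surrogate_eq_sub (hAn : An.IsHermitian) (z v : Fin n → ℂ) :
    surrogate Ap An z v =
      (star v ⬝ᵥ ((Ap + An) *ᵥ v)).re - (star (v - z) ⬝ᵥ (An *ᵥ (v - z))).re := by
  have h_square : (star (v - z) ⬝ᵥ (An *ᵥ (v - z))).re =
      (star v ⬝ᵥ (An *ᵥ v)).re - 2 * (star z ⬝ᵥ (An *ᵥ v)).re + (star z ⬝ᵥ (An *ᵥ z)).re :=
    re_star_sub_dotProduct_mulVec_sub hAn v z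
  rw [surrogate, h_square, add_mulVec, dotProduct_add, Complex.add_re]
  ring

theorem re_star_dotProduct_mulVec_le_surrogate (hAn : An.NegSemidef') (z v : Fin n → ℂ) :
    (star v ⬝ᵥ ((Ap + An) *ᵥ v)).re ≤ surrogate Ap An z v := by
  have h_hermitian : An.IsHermitian := isHermitian_neg_iff.mp hAn.isHermitian
  rw [surrogate_eq_sub h_hermitian]
  exact (le_sub_self_iff _).mpr (re_star_dotProduct_mulVec_nonpos hAn (v - z))

theorem surrogate_self_le_surrogate (hAn : An.NegSemidef') (z v : Fin n → ℂ) :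
    surrogate Ap An v v ≤ surrogate Ap An z v :=
  (surrogate_self v).trans_le (re_star_dotProduct_mulVec_le_surrogate hAn z v)

end Surrogate

theorem stmt10_general {n : ℕ} {J : Type*} {Ap An : J → Matrix (Fin n) (Fin n) ℂ}
    {c : J → ℝ} {s : ℝ} {v z : Fin n → ℂ} (hAn : ∀ j, (An j).NegSemidef')
    (hfeas : ∀ j, surrogate (Ap j) (An j) z v ≤ c j + s) (j : J) :
    surrogate (Ap j) (An j) v v ≤ c j + s :=
  (surrogate_self_le_surrogate (hAn j) z v).trans (hfeas j)

/-- If `v, z` satisfy the slack-relaxed surrogate constraints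
`g_j(v; z) ≤ c_j + s` for all `j` (with `s ≥ 0`), then `v` satisfies the
re-linearized constraints around itself with the same slack:
`g_j(v; v) ≤ c_j + s` for all `j`.  Hence the previous FPP iterate (with its
slack) is feasible for the next FPP subproblem and the optimal slack is
nonincreasing along the FPP iterations. -/
theorem stmt10 (n : ℕ) (J : Type*) [Fintype J]
    (A Ap An : J → Matrix (Fin n) (Fin n) ℂ) (c : J → ℝ)
    (hsum : ∀ j, A j = Ap j + An j)
    (hAp : ∀ j, (Ap j).PosSemidef) (hAn : ∀ j, (An j).NegSemidef')
    (s : ℝ) (hs : 0 ≤ s) (v z : Fin n → ℂ)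
    (hfeas : ∀ j, surrogate (Ap j) (An j) z v ≤ c j + s) :
    ∀ j, surrogate (Ap j) (An j) v v ≤ c j + s :=
  stmt10_general hAn hfeas
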